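/- arXiv:0910.5466 — 5 statements merged into one kernel-verified Lean document; each statement's English description precedes it below -/
import Mathlib

section
/- Let ξ₁ and ξ₂ be real-valued functions, twice continuously differentiable on the half-plane ℍ = {(H,r) ∈ ℝ² : r > 0}, each satisfying Joyce's equation ∂²ξ/∂H² + ∂²ξ/∂r² + (1/r)·∂ξ/∂r = 0 on ℍ. Then at every point of ℍ: ∂/∂r [ r·(ξ₁·∂ξ₂/∂r − ξ₂·∂ξ₁/∂r) ] = ∂/∂H [ r·(ξ₂·∂ξ₁/∂H − ξ₁·∂ξ₂/∂H) ]. In other words, the 1-form ε = ξ₁ dx₁ + ξ₂ dx₂ is closed, where dx₁ = r(∂ξ₂/∂r dH − ∂ξ₂/∂H dr) and dx₂ = −r(∂ξ₁/∂r dH − ∂ξ₁/∂H dr). -/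
/-! Expanding both sides by the product rule, the cross terms `∂ξ₁·∂ξ₂` cancel, and the difference of
the two sides is `r` times `ξ₁·J(ξ₂) − ξ₂·J(ξ₁)`, where `J(ξ) = ξ_HH + ξ_rr + ξ_r / r` vanishes. The C²
hypothesis, restricted to horizontal and vertical lines, makes the product rule applicable. -/

lemma differentiableAt_and_deriv_of_contDiffAt_two {f : ℝ → ℝ} {x : ℝ} (hf : ContDiffAt ℝ 2 f x) :
    DifferentiableAt ℝ f x ∧ DifferentiableAt ℝ (deriv f) x := by
  refine ⟨hf.differentiableAt (by norm_num), ?_⟩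
  have h : ContDiffAt ℝ 1 (fderiv ℝ f) x := hf.fderiv_right (by norm_num)
  exact (h.differentiableAt (by norm_num)).clm_apply (differentiableAt_const (1 : ℝ))

lemma contDiffAt_slices {ξ : ℝ → ℝ → ℝ}
    (hC : ContDiffOn ℝ 2 (fun p : ℝ × ℝ => ξ p.1 p.2) {p : ℝ × ℝ | 0 < p.2})
    (H : ℝ) {r : ℝ} (hr : 0 < r) :
    ContDiffAt ℝ 2 (fun h => ξ h r) H ∧ ContDiffAt ℝ 2 (fun s => ξ H s) r := by
  have hat : ContDiffAt ℝ 2 (fun p : ℝ × ℝ => ξ p.1 p.2) (H, r) :=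
    hC.contDiffAt ((isOpen_lt continuous_const continuous_snd).mem_nhds hr)
  exact ⟨hat.comp H (f := fun h => (h, r)) (contDiffAt_id.prodMk contDiffAt_const),
    hat.comp r (f := fun s => (H, s)) (contDiffAt_const.prodMk contDiffAt_id)⟩

/-- The derivative of a Wronskian: the products of first derivatives cancel. -/
lemma hasDerivAt_wronskian {f g : ℝ → ℝ} {x : ℝ}
    (hf : ContDiffAt ℝ 2 f x) (hg : ContDiffAt ℝ 2 g x) :
    HasDerivAt (fun t => f t * deriv g t - g t * deriv f t)
      (f x * deriv (deriv g) x - g x * deriv (deriv f) x) x := by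
  obtain ⟨f1, f2⟩ := differentiableAt_and_deriv_of_contDiffAt_two hf
  obtain ⟨g1, g2⟩ := differentiableAt_and_deriv_of_contDiffAt_two hg
  refine ((f1.hasDerivAt.mul g2.hasDerivAt).sub (g1.hasDerivAt.mul f2.hasDerivAt)).congr_deriv ?_
  ring

/-- If `ξ₁`, `ξ₂` are C² solutions of Joyce's equation
`∂²ξ/∂H² + ∂²ξ/∂r² + (1/r)·∂ξ/∂r = 0` on the half-plane `{(H,r) : r > 0}`, then
at every point of the half-plane
`∂/∂r [ r·(ξ₁·∂ξ₂/∂r − ξ₂·∂ξ₁/∂r) ] = ∂/∂H [ r·(ξ₂·∂ξ₁/∂H − ξ₁·∂ξ₂/∂H) ]`,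
i.e. the 1-form `ε = ξ₁ dx₁ + ξ₂ dx₂` of Donaldson's construction is closed. -/
theorem joyce_one_form_closed (ξ₁ ξ₂ : ℝ → ℝ → ℝ)
    (hC₁ : ContDiffOn ℝ 2 (fun p : ℝ × ℝ => ξ₁ p.1 p.2) {p : ℝ × ℝ | 0 < p.2})
    (hC₂ : ContDiffOn ℝ 2 (fun p : ℝ × ℝ => ξ₂ p.1 p.2) {p : ℝ × ℝ | 0 < p.2})
    (hJ₁ : ∀ H r : ℝ, 0 < r →
      deriv (fun h : ℝ => deriv (fun h' : ℝ => ξ₁ h' r) h) H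
      + deriv (fun s : ℝ => deriv (fun s' : ℝ => ξ₁ H s') s) r
      + (1/r) * deriv (fun s' : ℝ => ξ₁ H s') r = 0)
    (hJ₂ : ∀ H r : ℝ, 0 < r →
      deriv (fun h : ℝ => deriv (fun h' : ℝ => ξ₂ h' r) h) H
      + deriv (fun s : ℝ => deriv (fun s' : ℝ => ξ₂ H s') s) r
      + (1/r) * deriv (fun s' : ℝ => ξ₂ H s') r = 0)
    (H r : ℝ) (hr : 0 < r) :
    deriv (fun s : ℝ => s * (ξ₁ H s * deriv (fun s' : ℝ => ξ₂ H s') s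
        - ξ₂ H s * deriv (fun s' : ℝ => ξ₁ H s') s)) r
    = deriv (fun h : ℝ => r * (ξ₂ h r * deriv (fun h' : ℝ => ξ₁ h' r) h
        - ξ₁ h r * deriv (fun h' : ℝ => ξ₂ h' r) h)) H := by
  obtain ⟨a₁, b₁⟩ := contDiffAt_slices hC₁ H hr
  obtain ⟨a₂, b₂⟩ := contDiffAt_slices hC₂ H hr
  have hL := ((hasDerivAt_id' r).mul (hasDerivAt_wronskian b₁ b₂)).deriv
  have hR := ((hasDerivAt_wronskian a₂ a₁).const_mul r).deriv
  have e₁ := hJ₁ H r hr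
  have e₂ := hJ₂ H r hr
  refine hL.trans (Eq.trans ?_ hR.symm)
  have hrr : r * (1 / r) = 1 := mul_one_div_cancel hr.ne'
  linear_combination r * ξ₁ H r * e₂ - r * ξ₂ H r * e₁
    - (ξ₁ H r * deriv (fun s => ξ₂ H s) r - ξ₂ H r * deriv (fun s => ξ₁ H s) r) * hrr
end

section
/- Let α ≥ 0 and β ≤ 0 be real numbers, and define on the half-plane {(H,r) : r > 0} the functions ξ₁(H,r) = (1/2)·log(H + √(H² + r²)) + α·H and ξ₂(H,r) = (1/2)·log(√(H² + r²) − H) + β·H. Then at every point with r > 0 the Jacobian determinant is strictly positive: (∂ξ₁/∂H)·(∂ξ₂/∂r) − (∂ξ₁/∂r)·(∂ξ₂/∂H) > 0. -/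
/-!
Write `ρ = √(H² + r²)`, so that `ρ ± H > 0` for `r > 0`. The partial derivatives are
`∂ξ₁/∂H = 1/(2ρ) + α > 0`, `∂ξ₂/∂r = r/(2ρ(ρ - H)) > 0`, `∂ξ₁/∂r = r/(2ρ(ρ + H)) > 0` and
`∂ξ₂/∂H = -1/(2ρ) + β < 0`, so the determinant is a positive product minus a negative one.
The formulas for `ξ₂` follow from those for `ξ₁` by the symmetry `H ↦ -H`.
-/

lemma add_sqrt_sq_add_sq_pos (H : ℝ) {r : ℝ} (hr : 0 < r) : 0 < H + √(H ^ 2 + r ^ 2) := by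
  have h : |H| < √(H ^ 2 + r ^ 2) := Real.lt_sqrt_of_sq_lt (by rw [sq_abs]; nlinarith)
  linarith [neg_abs_le H]

lemma hasDerivAt_log_add_sqrt_left (a H : ℝ) {r : ℝ} (hr : 0 < r) :
    HasDerivAt (fun h : ℝ => (1/2) * Real.log (h + √(h ^ 2 + r ^ 2)) + a * h)
      (1 / (2 * √(H ^ 2 + r ^ 2)) + a) H := by
  have hp := add_sqrt_sq_add_sq_pos H hr
  have hq : 0 < H ^ 2 + r ^ 2 := by positivity
  have hs := Real.sqrt_pos.2 hq
  have h1 := (((hasDerivAt_id H).pow 2).add_const (r ^ 2)).sqrt hq.ne'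
  have h2 := ((((hasDerivAt_id H).add h1).log hp.ne').const_mul (1/2)).add
    ((hasDerivAt_id H).const_mul a)
  refine h2.congr_deriv ?_
  simp only [id, Pi.add_apply, Pi.pow_apply]
  field_simp
  ring

lemma hasDerivAt_log_add_sqrt_right (c H : ℝ) {r : ℝ} (hr : 0 < r) :
    HasDerivAt (fun s : ℝ => (1/2) * Real.log (H + √(H ^ 2 + s ^ 2)) + c)
      (r / (2 * √(H ^ 2 + r ^ 2) * (H + √(H ^ 2 + r ^ 2)))) r := by
  have hp := add_sqrt_sq_add_sq_pos H hr
  have hq : 0 < H ^ 2 + r ^ 2 := by positivity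
  have hs := Real.sqrt_pos.2 hq
  have h1 := (((hasDerivAt_id r).pow 2).const_add (H ^ 2)).sqrt hq.ne'
  have h2 := (((h1.const_add H).log hp.ne').const_mul (1/2)).add_const c
  refine h2.congr_deriv ?_
  simp only [id, Pi.pow_apply]
  field_simp
  ring

/-- For `α ≥ 0`, `β ≤ 0` and the pair of solutions
`ξ₁(H,r) = (1/2)·log(H + √(H² + r²)) + α·H`,
`ξ₂(H,r) = (1/2)·log(√(H² + r²) − H) + β·H` of Joyce's equation, the Jacobian
determinant `∂ξ₁/∂H·∂ξ₂/∂r − ∂ξ₁/∂r·∂ξ₂/∂H` is strictly positive on `{r > 0}`. -/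
theorem generalized_taub_nut_det_pos (α β : ℝ) (hα : 0 ≤ α) (hβ : β ≤ 0)
    (H r : ℝ) (hr : 0 < r) :
    0 < deriv (fun h : ℝ =>
          (1/2) * Real.log (h + Real.sqrt (h^2 + r^2)) + α * h) H
        * deriv (fun s : ℝ =>
          (1/2) * Real.log (Real.sqrt (H^2 + s^2) - H) + β * H) r
      - deriv (fun s : ℝ =>
          (1/2) * Real.log (H + Real.sqrt (H^2 + s^2)) + α * H) r
        * deriv (fun h : ℝ =>
          (1/2) * Real.log (Real.sqrt (h^2 + r^2) - h) + β * h) H := by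
  have hs : 0 < √(H ^ 2 + r ^ 2) := Real.sqrt_pos.2 (by positivity)
  have hp := add_sqrt_sq_add_sq_pos H hr
  have hm : 0 < -H + √((-H) ^ 2 + r ^ 2) := add_sqrt_sq_add_sq_pos (-H) hr
  -- The two derivatives of `ξ₂`, obtained from those of `ξ₁` by replacing `H` by `-H`.
  have h₂r : HasDerivAt (fun s : ℝ => (1/2) * Real.log (√(H ^ 2 + s ^ 2) - H) + β * H)
      (r / (2 * √((-H) ^ 2 + r ^ 2) * (-H + √((-H) ^ 2 + r ^ 2)))) r := by
    convert hasDerivAt_log_add_sqrt_right (β * H) (-H) hr using 5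
    rw [neg_sq, sub_eq_neg_add]
  have h₂H : HasDerivAt (fun h : ℝ => (1/2) * Real.log (√(h ^ 2 + r ^ 2) - h) + β * h)
      (-(1 / (2 * √((-H) ^ 2 + r ^ 2)) + -β)) H := by
    have h := (hasDerivAt_log_add_sqrt_left (-β) (-H) hr).scomp H (hasDerivAt_neg H)
    refine (h.congr_deriv (by simp)).congr_of_eventuallyEq (.of_forall fun x => ?_)
    simp [sub_eq_neg_add]
  rw [(hasDerivAt_log_add_sqrt_left α H hr).deriv, h₂r.deriv,
    (hasDerivAt_log_add_sqrt_right (α * H) H hr).deriv, h₂H.deriv, mul_neg, sub_neg_eq_add]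
  have hs' : 0 < √((-H) ^ 2 + r ^ 2) := by rwa [neg_sq]
  have hβ' : 0 ≤ -β := neg_nonneg.2 hβ
  positivity
end

section
/- Let d ≥ 2 and let ν₁, …, ν_d be vectors in ℤ² such that det(ν_{i−1}, ν_i) = −1 for all i = 2, …, d and det(ν_{i−1}, ν_{i+1}) = −2 for all i = 2, …, d−1, where det(x,y) = x₁y₂ − x₂y₁. Then ν_j = ν₁ + (j−1)(ν₂ − ν₁) for all j = 1, …, d, and there exists a vector η ∈ ℝ² with ⟨η, ν_j⟩ = 1 for all j = 1, …, d (where ⟨·,·⟩ is the standard inner product on ℝ²). -/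
/-!
Three vectors `a, b, c` in the plane satisfy `det(a,b) c = det(a,c) b - det(b,c) a`, so the
determinant conditions say exactly that `c = 2b - a` for consecutive normals: the sequence `ν`
has vanishing second difference and is an arithmetic progression. With `w = ν 2 - ν 1`, the
vector `η = (-w.2, w.1)` is orthogonal to `w` and pairs with `ν 1` to `-det(ν 1, w) = 1`, hence
pairs to `1` with every term.
-/

/-- The three-term linear relation among plane vectors, solved for the last one. -/
lemma eq_two_smul_sub_of_det {a b c : ℤ × ℤ} (hab : a.1 * b.2 - a.2 * b.1 = -1)
    (hbc : b.1 * c.2 - b.2 * c.1 = -1) (hac : a.1 * c.2 - a.2 * c.1 = -2) :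
    c = (2 : ℤ) • b - a := by
  ext
  · simp only [Prod.fst_sub, Prod.smul_fst, smul_eq_mul]
    linear_combination c.1 * hab - b.1 * hac + a.1 * hbc
  · simp only [Prod.snd_sub, Prod.smul_snd, smul_eq_mul]
    linear_combination c.2 * hab - b.2 * hac + a.2 * hbc

/-- Let `ν₁, …, ν_d ∈ ℤ²` (`d ≥ 2`) satisfy `det(ν_{i−1}, ν_i) = −1` for
`i = 2, …, d` and `det(ν_{i−1}, ν_{i+1}) = −2` for `i = 2, …, d−1`. Then
`ν_j = ν₁ + (j−1)(ν₂ − ν₁)` for `j = 1, …, d`, and there is a vector `η ∈ ℝ²`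
with `⟨η, ν_j⟩ = 1` for all `j = 1, …, d`. -/
theorem c1_zero_normals (d : ℕ) (hd : 2 ≤ d) (ν : ℕ → ℤ × ℤ)
    (hdet1 : ∀ i : ℕ, 2 ≤ i → i ≤ d →
      (ν (i - 1)).1 * (ν i).2 - (ν (i - 1)).2 * (ν i).1 = -1)
    (hdet2 : ∀ i : ℕ, 2 ≤ i → i ≤ d - 1 →
      (ν (i - 1)).1 * (ν (i + 1)).2 - (ν (i - 1)).2 * (ν (i + 1)).1 = -2) :
    (∀ j : ℕ, 1 ≤ j → j ≤ d → ν j = ν 1 + ((j : ℤ) - 1) • (ν 2 - ν 1)) ∧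
    ∃ η : ℝ × ℝ, ∀ j : ℕ, 1 ≤ j → j ≤ d →
      η.1 * ((ν j).1 : ℝ) + η.2 * ((ν j).2 : ℝ) = 1 := by
  have hprog : ∀ j : ℕ, 1 ≤ j → j ≤ d → ν j = ν 1 + ((j : ℤ) - 1) • (ν 2 - ν 1) := by
    intro j
    induction j using Nat.strong_induction_on with
    | _ j ih =>
      intro h1 hjd
      match j, ih, h1, hjd with
      | 1, _, _, _ => simp
      | 2, _, _, _ => norm_num
      | k + 3, ih, _, hjd =>
        have hrec := eq_two_smul_sub_of_det (hdet1 (k + 2) (by omega) (by omega))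
          (hdet1 (k + 3) (by omega) hjd) (hdet2 (k + 2) (by omega) (by omega))
        have e1 := ih (k + 1) (by omega) (by omega) (by omega)
        have e2 := ih (k + 2) (by omega) (by omega) (by omega)
        change ν (k + 3) = (2 : ℤ) • ν (k + 2) - ν (k + 1) at hrec
        rw [hrec, e1, e2]
        push_cast
        module
  refine ⟨hprog, ((ν 1).2 - (ν 2).2, (ν 2).1 - (ν 1).1), fun j h1 hjd => ?_⟩
  have hdet : ((ν 1).1 : ℝ) * (ν 2).2 - (ν 1).2 * (ν 2).1 = -1 := by
    exact_mod_cast hdet1 2 le_rfl hd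
  rw [hprog j h1 hjd]
  simp only [Prod.fst_add, Prod.snd_add, Prod.smul_fst, Prod.smul_snd, Prod.fst_sub,
    Prod.snd_sub, smul_eq_mul]
  push_cast
  linear_combination -hdet
end

section
/- Let p ≥ 1 be a real number, a > 0, H ∈ ℝ and r > 0. Define ρ = √(H² + r²), ρ_a = √((H+a)² + r²), x₁ = (1/2)(H + ρ − (H+a) + ρ_a) and x₂ = (1/2)(−H + ρ + (p−1)(−(H+a) + ρ_a)). Then the following three identities hold: (px₁ + a)·(H + ρ) = 2x₁·(px₁ − x₂ + a); (px₁ + a)·(−H + ρ) = 2x₂·(x₁ + a); and (px₁ + a)·((H+a) + ρ_a) = 2(x₁ + a)·(px₁ − x₂ + a). -/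
/-!
Put `s = ρ + H`, `t = ρ - H`, `S = ρₐ + (H + a)`, `T = ρₐ - (H + a)`. Then `s t = r² = S T` and
`2a = S - T - s + t`, while `2 x₁ = s + T` and `2 x₂ = t + (p - 1) T`. In these variables the
difference of the two sides of each identity is a multiple of `s t - S T = 0`, with factors
`1/2`, `(p - 1)/2` and `-(p - 1)/2` respectively.
-/

/-- The inversion identities for the ALE scalar-flat Kähler metrics on
`O(−p)`: with `ρ = √(H² + r²)`, `ρₐ = √((H+a)² + r²)`,
`x₁ = (1/2)(H + ρ − (H+a) + ρₐ)` and `x₂ = (1/2)(−H + ρ + (p−1)(−(H+a) + ρₐ))`,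
one has `(px₁ + a)(H + ρ) = 2x₁(px₁ − x₂ + a)`,
`(px₁ + a)(−H + ρ) = 2x₂(x₁ + a)` and
`(px₁ + a)((H+a) + ρₐ) = 2(x₁ + a)(px₁ − x₂ + a)`. -/
theorem O_minus_p_inversion (p a H r : ℝ) (hp : 1 ≤ p) (ha : 0 < a) (hr : 0 < r)
    (ρ ρa x₁ x₂ : ℝ)
    (hρ : ρ = Real.sqrt (H^2 + r^2))
    (hρa : ρa = Real.sqrt ((H + a)^2 + r^2))
    (hx₁ : x₁ = (1/2) * (H + ρ - (H + a) + ρa))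
    (hx₂ : x₂ = (1/2) * (-H + ρ + (p - 1) * (-(H + a) + ρa))) :
    (p * x₁ + a) * (H + ρ) = 2 * x₁ * (p * x₁ - x₂ + a) ∧
    (p * x₁ + a) * (-H + ρ) = 2 * x₂ * (x₁ + a) ∧
    (p * x₁ + a) * ((H + a) + ρa) = 2 * (x₁ + a) * (p * x₁ - x₂ + a) := by
  have h : ρ ^ 2 = H ^ 2 + r ^ 2 := by
    rw [hρ]; exact Real.sq_sqrt (by positivity)
  have ha' : ρa ^ 2 = (H + a) ^ 2 + r ^ 2 := by
    rw [hρa]; exact Real.sq_sqrt (by positivity)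
  subst hx₁ hx₂
  refine ⟨?_, ?_, ?_⟩
  · linear_combination (1 / 2) * (h - ha')
  · linear_combination ((p - 1) / 2) * (h - ha')
  · linear_combination (-(p - 1) / 2) * (h - ha')
end

section
/- Fix a real constant a and let u > 0, v > 0. Define ρ̃(u,v) = √((u−v+a)² + 4uv), A(u,v) = ρ̃ + (u−v+a), B(u,v) = ρ̃ − (u−v+a), and F(u,v) = (1/2)·((A−B)·log A − (A+B)) = (u−v+a)·log A − ρ̃. Then A > 0, B > 0, A·B = 4uv, and the partial derivatives of F satisfy ∂F/∂u = log A − B/(2u) and ∂F/∂v = −log A − B/(2v). -/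
/-!
Write `h = u - v + a` and `p = 4uv`, so that `ρ = √(h² + p)`, `A = ρ + h`, `B = ρ - h`,
`A B = p` and `F = h log A - ρ`. Along a curve, `ρ ρ' = h h' + p'/2`, hence
`F' = h' log A + h (ρ' + h') / A - ρ' = h' log A + (h h' - ρ ρ') / A = h' log A - p' B / (2p)`.
Both partial derivatives are instances of this formula, with `h' = ±1` and `p' / p = 1/u`
or `1/v`.
-/

lemma sqrt_sq_add_add_pos (h p : ℝ) (hp : 0 < p) : 0 < √(h ^ 2 + p) + h := by
  have : |h| < √(h ^ 2 + p) := Real.lt_sqrt_of_sq_lt (by rw [sq_abs]; linarith)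
  linarith [neg_abs_le h]

lemma sqrt_sq_add_sub_pos (h p : ℝ) (hp : 0 < p) : 0 < √(h ^ 2 + p) - h := by
  simpa [sub_eq_add_neg] using sqrt_sq_add_add_pos (-h) p hp

/-- The derivative of `h log A - ρ` along a curve `(h, p)`, where `ρ = √(h² + p)` and
`A = ρ + h`. -/
lemma hasDerivAt_mul_log_sub_sqrt {h p : ℝ → ℝ} {h' p' t : ℝ} (hh : HasDerivAt h h' t)
    (hp : HasDerivAt p p' t) (hpos : 0 < p t) :
    HasDerivAt (fun s => h s * Real.log (√(h s ^ 2 + p s) + h s) - √(h s ^ 2 + p s))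
      (h' * Real.log (√(h t ^ 2 + p t) + h t)
        - p' * (√(h t ^ 2 + p t) - h t) / (2 * p t)) t := by
  have hq : 0 < h t ^ 2 + p t := by positivity
  have hA := sqrt_sq_add_add_pos (h t) (p t) hpos
  have hρ : HasDerivAt (fun s => √(h s ^ 2 + p s)) _ t := ((hh.fun_pow 2).fun_add hp).sqrt hq.ne'
  have hF := (hh.fun_mul ((hρ.fun_add hh).log hA.ne')).fun_sub hρ
  refine hF.congr_deriv ?_
  have hs := Real.sq_sqrt hq.le
  have hr := Real.sqrt_pos.2 hq
  generalize √(h t ^ 2 + p t) = r at *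
  -- Eliminate `p t = A B`, so that only the nonvanishing of `r`, `A` and `B` is needed.
  have hpt : p t = (r + h t) * (r - h t) := by linear_combination -hs
  have hB : r - h t ≠ 0 := by
    intro h0
    rw [hpt, h0, mul_zero] at hpos
    exact lt_irrefl _ hpos
  rw [hpt]
  have hA' := hA.ne'
  have hr' := hr.ne'
  field_simp
  push_cast
  ring

/-- The explicit primitive for the gravitational instanton potentials: with
`ρ̃(u,v) = √((u−v+a)² + 4uv)`, `A = ρ̃ + (u−v+a)`, `B = ρ̃ − (u−v+a)` and
`F = (1/2)((A−B)·log A − (A+B))`, for `u, v > 0` one has `A > 0`, `B > 0`,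
`A·B = 4uv`, `F = (u−v+a)·log A − ρ̃`, and
`∂F/∂u = log A − B/(2u)`, `∂F/∂v = −log A − B/(2v)`. -/
theorem instanton_primitive (a u v : ℝ) (hu : 0 < u) (hv : 0 < v) :
    let ρ : ℝ → ℝ → ℝ := fun u v => Real.sqrt ((u - v + a)^2 + 4*u*v)
    let A : ℝ → ℝ → ℝ := fun u v => ρ u v + (u - v + a)
    let B : ℝ → ℝ → ℝ := fun u v => ρ u v - (u - v + a)
    let F : ℝ → ℝ → ℝ := fun u v =>
      (1/2) * ((A u v - B u v) * Real.log (A u v) - (A u v + B u v))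
    0 < A u v ∧ 0 < B u v ∧ A u v * B u v = 4*u*v ∧
    F u v = (u - v + a) * Real.log (A u v) - ρ u v ∧
    deriv (fun u' : ℝ => F u' v) u = Real.log (A u v) - B u v / (2*u) ∧
    deriv (fun v' : ℝ => F u v') v = -Real.log (A u v) - B u v / (2*v) := by
  intro ρ A B F
  have hp : 0 < 4 * u * v := by positivity
  have hF : ∀ x y, F x y = (x - y + a) * Real.log (A x y) - ρ x y := by
    intro x y
    simp only [F, A, B]
    ring
  refine ⟨sqrt_sq_add_add_pos _ _ hp, sqrt_sq_add_sub_pos _ _ hp, ?_, hF u v, ?_, ?_⟩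
  · have hs : ρ u v ^ 2 = (u - v + a) ^ 2 + 4 * u * v := Real.sq_sqrt (by positivity)
    simp only [A, B]
    linear_combination hs
  · have hh : HasDerivAt (fun x : ℝ => x - v + a) 1 u :=
      ((hasDerivAt_id' u).sub_const v).add_const a
    have hq : HasDerivAt (fun x : ℝ => 4 * x * v) (4 * v) u := by
      simpa using ((hasDerivAt_id' u).const_mul 4).mul_const v
    simp only [hF]
    refine ((hasDerivAt_mul_log_sub_sqrt hh hq hp).congr_deriv ?_).deriv
    simp only [A, B, ρ]
    field_simp
  · have hh : HasDerivAt (fun y : ℝ => u - y + a) (-1) v :=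
      ((hasDerivAt_id' v).const_sub u).add_const a
    have hq : HasDerivAt (fun y : ℝ => 4 * u * y) (4 * u) v := by
      simpa using (hasDerivAt_id' v).const_mul (4 * u)
    simp only [hF]
    refine ((hasDerivAt_mul_log_sub_sqrt hh hq hp).congr_deriv ?_).deriv
    simp only [A, B, ρ]
    field_simp
end
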